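/- arXiv:1912.06541 — 5 statements merged into one kernel-verified Lean document; each statement's English description precedes it below -/
import Mathlib

section
/- Assume ν is infinitesimally invariant for N₀, i.e. ∫_H N₀φ dν = 0 for every cylinder function φ. Then for every cylinder function φ one has the integration by parts formula ∫_H φ(x) N₀φ(x) ν(dx) = −(1/2) ∫_H |Q^{1/2}Dφ|²(x) ν(dx). -/
open MeasureTheory
open scoped InnerProductSpace BigOperators

/-- The coordinate map `x ↦ (⟪x, e 1⟫, …, ⟪x, e n⟫)` of a cylinder function. -/
noncomputable def coords {H : Type*} [NormedAddCommGroup H] [InnerProductSpace ℝ H]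
    (e : ℕ → H) (n : ℕ) (x : H) : Fin n → ℝ :=
  fun i => ⟪x, e i.1⟫_ℝ

/-- The `i`-th partial derivative of `f : ℝⁿ → ℝ`. -/
noncomputable def pd {n : ℕ} (f : (Fin n → ℝ) → ℝ) (i : Fin n) (y : Fin n → ℝ) : ℝ :=
  fderiv ℝ f y (Pi.single i 1)

/-- The second partial derivative `∂_{ii} f` of `f : ℝⁿ → ℝ`. -/
noncomputable def pd2 {n : ℕ} (f : (Fin n → ℝ) → ℝ) (i : Fin n) (y : Fin n → ℝ) : ℝ :=
  fderiv ℝ (fun z => pd f i z) y (Pi.single i 1)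

/-- `f ∈ C_b²(ℝⁿ)`: twice continuously differentiable with bounded derivatives
up to order 2. -/
def CbTwo {n : ℕ} (f : (Fin n → ℝ) → ℝ) : Prop :=
  ContDiff ℝ 2 f ∧ ∀ k : ℕ, k ≤ 2 → ∃ C : ℝ, ∀ y, ‖iteratedFDeriv ℝ k f y‖ ≤ C

/-- The Kolmogorov operator `N₀` applied to the cylinder function
`φ(x) = f(⟪x,e 1⟫, …, ⟪x,e n⟫)`:
`N₀φ(x) = (1/2) Σ_i q_i ∂_{ii} f + Σ_i a_i(x) ∂_i f`. -/
noncomputable def KolmN0 {H : Type*} [NormedAddCommGroup H] [InnerProductSpace ℝ H]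
    (e : ℕ → H) (q : ℕ → ℝ) (a : ℕ → H → ℝ) {n : ℕ}
    (f : (Fin n → ℝ) → ℝ) (x : H) : ℝ :=
  (1/2) * ∑ i : Fin n, q i.1 * pd2 f i (coords e n x)
    + ∑ i : Fin n, a i.1 x * pd f i (coords e n x)

/-!
`N₀` is a second order operator whose second order part has diagonal coefficients `q`, so its
failure to be a derivation is the bilinear carré du champ:
`N₀(φψ) = φ N₀ψ + ψ N₀φ + ⟪Q^{1/2}Dφ, Q^{1/2}Dψ⟫`. The space `C_b²(ℝⁿ)` is an algebra, so
invariance may be applied to `φ²`, and integrating the identity with `ψ = φ` gives the formula.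
-/

/-- The carré du champ `⟪Q^{1/2}Dφ, Q^{1/2}Dψ⟫(x)` of the cylinder functions `φ = f ∘ coords e n`
and `ψ = g ∘ coords e n`; on the diagonal it is `|Q^{1/2}Dφ|²`. -/
noncomputable def carreDuChamp {H : Type*} [NormedAddCommGroup H] [InnerProductSpace ℝ H]
    (e : ℕ → H) (q : ℕ → ℝ) {n : ℕ} (f g : (Fin n → ℝ) → ℝ) (x : H) : ℝ :=
  ∑ i : Fin n, q i.1 * (pd f i (coords e n x) * pd g i (coords e n x))

section PartialDerivatives

variable {n : ℕ} {f g : (Fin n → ℝ) → ℝ}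

lemma pd_mul {y : Fin n → ℝ} (hf : DifferentiableAt ℝ f y) (hg : DifferentiableAt ℝ g y)
    (i : Fin n) : pd (f * g) i y = f y * pd g i y + g y * pd f i y := by
  simp only [pd, fderiv_mul hf hg, add_apply, smul_apply, smul_eq_mul]

lemma pd2_mul (hf : Differentiable ℝ f) (hg : Differentiable ℝ g) {i : Fin n} {y : Fin n → ℝ}
    (hf' : DifferentiableAt ℝ (pd f i) y) (hg' : DifferentiableAt ℝ (pd g i) y) :
    pd2 (f * g) i y = f y * pd2 g i y + 2 * (pd f i y * pd g i y) + g y * pd2 f i y := by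
  have hpd : pd (f * g) i = f * pd g i + g * pd f i := funext fun z => pd_mul (hf z) (hg z) i
  calc pd2 (f * g) i y = fderiv ℝ (f * pd g i + g * pd f i) y (Pi.single i 1) := by
        rw [← hpd, pd2]
    _ = pd (f * pd g i) i y + pd (g * pd f i) i y := by
        rw [fderiv_add ((hf y).mul hg') ((hg y).mul hf'), add_apply, pd, pd]
    _ = (f y * pd2 g i y + pd g i y * pd f i y) + (g y * pd2 f i y + pd f i y * pd g i y) := by
        rw [pd_mul (hf y) hg', pd_mul (hg y) hf']
        rfl
    _ = f y * pd2 g i y + 2 * (pd f i y * pd g i y) + g y * pd2 f i y := by ring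

lemma contDiff_pd {m k : WithTop ℕ∞} (hf : ContDiff ℝ m f) (hkm : k + 1 ≤ m) (i : Fin n) :
    ContDiff ℝ k (pd f i) :=
  (hf.fderiv_right hkm).clm_apply contDiff_const

lemma continuous_pd2 (hf : ContDiff ℝ 2 f) (i : Fin n) : Continuous (pd2 f i) :=
  (contDiff_pd (contDiff_pd hf one_add_one_eq_two.le i) (zero_add 1).le i).continuous

lemma norm_pd_le (f : (Fin n → ℝ) → ℝ) (i : Fin n) (y : Fin n → ℝ) :
    ‖pd f i y‖ ≤ ‖iteratedFDeriv ℝ 1 f y‖ := by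
  simpa [pd, norm_iteratedFDeriv_one, Pi.norm_single] using
    (fderiv ℝ f y).le_opNorm (Pi.single i 1)

lemma norm_pd2_le {y : Fin n → ℝ} (hf : DifferentiableAt ℝ (fderiv ℝ f) y) (i : Fin n) :
    ‖pd2 f i y‖ ≤ ‖iteratedFDeriv ℝ 2 f y‖ := by
  have hpd2 : pd2 f i y = iteratedFDeriv ℝ 2 f y fun _ => Pi.single i 1 := by
    simp only [pd2, pd]
    rw [fderiv_clm_apply hf (differentiableAt_const _), iteratedFDeriv_two_apply]
    simp
  simpa [hpd2, Pi.norm_single] using (iteratedFDeriv ℝ 2 f y).le_opNorm fun _ => Pi.single i 1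

end PartialDerivatives

namespace CbTwo

variable {n : ℕ} {f g : (Fin n → ℝ) → ℝ}

lemma mul (hf : CbTwo f) (hg : CbTwo g) : CbTwo (f * g) := by
  refine ⟨hf.1.mul hg.1, fun k hk => ?_⟩
  choose! C hC using hf.2
  choose! D hD using hg.2
  refine ⟨∑ j ∈ Finset.range (k + 1), (k.choose j : ℝ) * C j * D (k - j), fun y => ?_⟩
  refine (norm_iteratedFDeriv_mul_le hf.1 hg.1 y (mod_cast hk)).trans
    (Finset.sum_le_sum fun j hj => ?_)
  have hjk : j ≤ k := Finset.mem_range_succ_iff.1 hj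
  have hCj := hC j (hjk.trans hk) y
  have hC_nonneg : 0 ≤ C j := (norm_nonneg _).trans hCj
  have hDj := hD (k - j) ((k.sub_le j).trans hk) y
  gcongr

lemma continuous_pd (hf : CbTwo f) (i : Fin n) : Continuous (pd f i) :=
  (contDiff_pd hf.1 one_add_one_eq_two.le i).continuous

lemma exists_norm_le (hf : CbTwo f) : ∃ C, ∀ y, ‖f y‖ ≤ C := by
  simpa only [norm_iteratedFDeriv_zero] using hf.2 0 zero_le_two

lemma exists_norm_pd_le (hf : CbTwo f) (i : Fin n) : ∃ C, ∀ y, ‖pd f i y‖ ≤ C :=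
  (hf.2 1 one_le_two).imp fun _ hC y => (norm_pd_le f i y).trans (hC y)

lemma exists_norm_pd2_le (hf : CbTwo f) (i : Fin n) : ∃ C, ∀ y, ‖pd2 f i y‖ ≤ C := by
  have hf' : Differentiable ℝ (fderiv ℝ f) :=
    (hf.1.fderiv_right one_add_one_eq_two.le).differentiable one_ne_zero
  exact (hf.2 2 le_rfl).imp fun _ hC y => (norm_pd2_le (hf' y) i).trans (hC y)

end CbTwo

section KolmogorovOperator

variable {H : Type*} [NormedAddCommGroup H] [InnerProductSpace ℝ H]
  {n : ℕ} {f g : (Fin n → ℝ) → ℝ}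

lemma kolmN0_mul (e : ℕ → H) (q : ℕ → ℝ) (a : ℕ → H → ℝ)
    (hf : ContDiff ℝ 2 f) (hg : ContDiff ℝ 2 g) (x : H) :
    KolmN0 e q a (f * g) x
      = f (coords e n x) * KolmN0 e q a g x + g (coords e n x) * KolmN0 e q a f x
        + carreDuChamp e q f g x := by
  have hf₁ := hf.differentiable two_ne_zero
  have hg₁ := hg.differentiable two_ne_zero
  have hpd {h : (Fin n → ℝ) → ℝ} (hh : ContDiff ℝ 2 h) (i : Fin n) : Differentiable ℝ (pd h i) :=
    (contDiff_pd hh one_add_one_eq_two.le i).differentiable one_ne_zero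
  simp only [KolmN0, carreDuChamp, pd_mul (hf₁ _) (hg₁ _),
    pd2_mul hf₁ hg₁ (hpd hf _ _) (hpd hg _ _), mul_add, Finset.mul_sum, ← Finset.sum_add_distrib]
  exact Finset.sum_congr rfl fun i _ => by ring

lemma continuous_coords (e : ℕ → H) (n : ℕ) : Continuous (coords e n) := by
  unfold coords
  fun_prop

variable [MeasurableSpace H] [OpensMeasurableSpace H] {ν : Measure H}

lemma integrable_comp_coords_mul (e : ℕ → H) (hf : Continuous f) (hb : ∃ C, ∀ y, ‖f y‖ ≤ C)
    {u : H → ℝ} (hu : Integrable u ν) : Integrable (fun x => f (coords e n x) * u x) ν :=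
  let ⟨_, hC⟩ := hb
  hu.bdd_mul (hf.comp (continuous_coords e n)).aestronglyMeasurable (.of_forall fun _ => hC _)

variable [IsFiniteMeasure ν]

lemma integrable_comp_coords (e : ℕ → H) (hf : Continuous f) (hb : ∃ C, ∀ y, ‖f y‖ ≤ C) :
    Integrable (fun x => f (coords e n x)) ν := by
  simpa only [mul_one] using integrable_comp_coords_mul e hf hb (integrable_const (1 : ℝ))

lemma integrable_kolmN0 (e : ℕ → H) (q : ℕ → ℝ) {a : ℕ → H → ℝ}
    (ha : ∀ i, Integrable (a i) ν) (hf : CbTwo f) : Integrable (KolmN0 e q a f) ν := by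
  have hdiffusion (i : Fin n) : Integrable (fun x => q i * pd2 f i (coords e n x)) ν :=
    (integrable_comp_coords e (continuous_pd2 hf.1 i) (hf.exists_norm_pd2_le i)).const_mul _
  have hdrift (i : Fin n) : Integrable (fun x => a i x * pd f i (coords e n x)) ν := by
    simpa only [mul_comm] using
      integrable_comp_coords_mul e (hf.continuous_pd i) (hf.exists_norm_pd_le i) (ha i)
  exact ((integrable_finsetSum _ fun i _ => hdiffusion i).const_mul _).add
    (integrable_finsetSum _ fun i _ => hdrift i)

lemma integrable_carreDuChamp (e : ℕ → H) (q : ℕ → ℝ) (hf : CbTwo f) (hg : CbTwo g) :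
    Integrable (carreDuChamp e q f g) ν :=
  integrable_finsetSum _ fun i _ =>
    (integrable_comp_coords_mul e (hf.continuous_pd i) (hf.exists_norm_pd_le i)
      (integrable_comp_coords e (hg.continuous_pd i) (hg.exists_norm_pd_le i))).const_mul _

lemma integral_kolmN0_mul (e : ℕ → H) (q : ℕ → ℝ) {a : ℕ → H → ℝ}
    (ha : ∀ i, Integrable (a i) ν) (hf : CbTwo f) (hg : CbTwo g) :
    ∫ x, KolmN0 e q a (f * g) x ∂ν
      = ∫ x, f (coords e n x) * KolmN0 e q a g x ∂ν
        + ∫ x, g (coords e n x) * KolmN0 e q a f x ∂ν + ∫ x, carreDuChamp e q f g x ∂ν := by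
  have hfg := integrable_comp_coords_mul e hf.1.continuous hf.exists_norm_le
    (integrable_kolmN0 e q ha hg)
  have hgf := integrable_comp_coords_mul e hg.1.continuous hg.exists_norm_le
    (integrable_kolmN0 e q ha hf)
  simp only [kolmN0_mul e q a hf.1 hg.1]
  rw [integral_add (hfg.fun_add hgf) (integrable_carreDuChamp e q hf hg), integral_add hfg hgf]

theorem integration_by_parts_of_infinitesimally_invariant_general (e : ℕ → H) (q : ℕ → ℝ)
    {a : ℕ → H → ℝ} (ha : ∀ i, Integrable (a i) ν) (hf : CbTwo f)
    (hinv : ∫ x, KolmN0 e q a (f * f) x ∂ν = 0) :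
    ∫ x, f (coords e n x) * KolmN0 e q a f x ∂ν
      = -(1/2) * ∫ x, ∑ i : Fin n, q i.1 * (pd f i (coords e n x)) ^ 2 ∂ν := by
  have hmul := integral_kolmN0_mul e q ha hf hf
  simp only [hinv, carreDuChamp, ← sq (pd _ _ _)] at hmul
  linarith

end KolmogorovOperator

/-- If `ν` is infinitesimally invariant for `N₀`, then for every cylinder
function `φ`, `∫ φ N₀φ dν = −(1/2) ∫ |Q^{1/2}Dφ|² dν`. -/
theorem integration_by_parts_of_infinitesimally_invariant
    {H : Type*} [NormedAddCommGroup H] [InnerProductSpace ℝ H]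
    [MeasurableSpace H] [BorelSpace H] [SecondCountableTopology H]
    (ν : Measure H) [IsProbabilityMeasure ν]
    (e : ℕ → H) (he : Orthonormal ℝ e)
    (q : ℕ → ℝ) (hq : ∀ i, 0 < q i)
    (a : ℕ → H → ℝ) (ha : ∀ i, Measurable (a i))
    (ha2 : ∀ i, Integrable (fun x => (a i x) ^ 2) ν)
    (hinv : ∀ (n : ℕ), 1 ≤ n → ∀ f : (Fin n → ℝ) → ℝ, CbTwo f →
      ∫ x, KolmN0 e q a f x ∂ν = 0)
    (n : ℕ) (hn : 1 ≤ n) (f : (Fin n → ℝ) → ℝ) (hf : CbTwo f) :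
    ∫ x, f (coords e n x) * KolmN0 e q a f x ∂ν
      = -(1/2) * ∫ x, ∑ i : Fin n, q i.1 * (pd f i (coords e n x)) ^ 2 ∂ν := by
  exact integration_by_parts_of_infinitesimally_invariant_general e q
    (fun i => ((memLp_two_iff_integrable_sq (ha i).aestronglyMeasurable).2 (ha2 i)).integrable
      one_le_two) hf (hinv n hn _ (hf.mul hf))
end

section
/- Let (X, 𝒜, ν) be a measure space with ν a finite measure, K a real Hilbert space, M > 0, v : X → K measurable with ‖v(x)‖_K ≤ M for ν-a.e. x, and λ > 4M². For pairs (f, F), (g, G) with f, g ∈ L²(ν;ℝ) and F, G ∈ L²(ν;K), define the bilinear form E((f,F),(g,G)) := (1/2) ∫_X ⟨F(x), G(x)⟩ ν(dx) − ∫_X ⟨v(x), F(x)⟩ g(x) ν(dx) + (1+λ) ∫_X f(x) g(x) ν(dx). Then there exists K₀ > 0, depending only on M and λ, such that for all such pairs: |E((f,F),(g,G))| ≤ K₀ · E((f,F),(f,F))^{1/2} · E((g,G),(g,G))^{1/2} (the weak sector condition). -/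
open MeasureTheory
open scoped InnerProductSpace

/-!
On `W × U`, with `W = L²(ν; ℝ)` and `U = L²(ν; K)`, the form is
`a ⟪F, G⟫ - ⟪T F, g⟫ + c ⟪f, g⟫`, where `T F = ⟪v, F⟫` has operator norm at most `M`.
It is bounded with respect to the norm `√(a ‖F‖² + c ‖f‖²)`. By AM-GM the drift term takes up at
most the fraction `θ = M / (2 √a √c)` of the square of that norm on the diagonal, so the form is
also coercive as soon as `M ^ 2 < 4 * a * c`, and bounded coercive forms satisfy the sector
condition.
-/

theorem abs_le_div_mul_sqrt_mul_sqrt_of_coercive {V : Type*} {B : V → V → ℝ} {N : V → ℝ} {C α : ℝ}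
    (hC : 0 ≤ C) (hα : 0 < α) (bounded : ∀ x y, |B x y| ≤ C * (N x * N y))
    (coercive : ∀ x, α * N x ^ 2 ≤ B x x) (x y : V) :
    |B x y| ≤ C / α * √(B x x) * √(B y y) := by
  have abs_norm_le (z : V) : √α * |N z| ≤ √(B z z) := by
    rw [← Real.sqrt_sq_eq_abs, ← Real.sqrt_mul hα.le]
    exact Real.sqrt_le_sqrt (coercive z)
  calc |B x y| ≤ C * (N x * N y) := bounded x y
    _ ≤ C * (|N x| * |N y|) := by
      rw [← abs_mul]
      gcongr
      exact le_abs_self _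
    _ = C / α * (√α * |N x|) * (√α * |N y|) := by
      field_simp
      rw [Real.sq_sqrt hα.le]
    _ ≤ C / α * √(B x x) * √(B y y) := by
      gcongr <;> exact abs_norm_le _

section EnergyNorm

variable {W U : Type*} [NormedAddCommGroup W] [NormedAddCommGroup U] {a c : ℝ}

/-- The norm `√(a ‖F‖² + c ‖f‖²)` of a pair `(f, F)`, with respect to which `driftForm a c T` is
bounded and coercive. -/
noncomputable def energyNorm (a c : ℝ) (x : W × U) : ℝ :=
  √(a * ‖x.2‖ ^ 2 + c * ‖x.1‖ ^ 2)

theorem energyNorm_nonneg (a c : ℝ) (x : W × U) : 0 ≤ energyNorm a c x :=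
  Real.sqrt_nonneg _

theorem energyNorm_sq (ha : 0 ≤ a) (hc : 0 ≤ c) (x : W × U) :
    energyNorm a c x ^ 2 = a * ‖x.2‖ ^ 2 + c * ‖x.1‖ ^ 2 :=
  Real.sq_sqrt (by positivity)

theorem sqrt_mul_norm_snd_le_energyNorm (ha : 0 ≤ a) (hc : 0 ≤ c) (x : W × U) :
    √a * ‖x.2‖ ≤ energyNorm a c x := by
  refine Real.le_sqrt_of_sq_le ?_
  rw [mul_pow, Real.sq_sqrt ha]
  exact le_add_of_nonneg_right (by positivity)

theorem sqrt_mul_norm_fst_le_energyNorm (ha : 0 ≤ a) (hc : 0 ≤ c) (x : W × U) :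
    √c * ‖x.1‖ ≤ energyNorm a c x := by
  refine Real.le_sqrt_of_sq_le ?_
  rw [mul_pow, Real.sq_sqrt hc]
  exact le_add_of_nonneg_left (by positivity)

end EnergyNorm

section DriftForm

variable {W U : Type*} [NormedAddCommGroup W] [InnerProductSpace ℝ W]
  [NormedAddCommGroup U] [InnerProductSpace ℝ U] {a c θ : ℝ} {T : U →L[ℝ] W}

/-- The form `((f, F), (g, G)) ↦ a ⟪F, G⟫ - ⟪T F, g⟫ + c ⟪f, g⟫`, where `F` stands for the gradient
of `f` and `T` for the perturbation by a drift. A pair has its gradient as second component. -/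
noncomputable def driftForm (a c : ℝ) (T : U →L[ℝ] W) (x y : W × U) : ℝ :=
  a * ⟪x.2, y.2⟫_ℝ - ⟪T x.2, y.1⟫_ℝ + c * ⟪x.1, y.1⟫_ℝ

theorem abs_mul_inner_le {E : Type*} [NormedAddCommGroup E] [InnerProductSpace ℝ E]
    (ha : 0 ≤ a) (u v : E) : |a * ⟪u, v⟫_ℝ| ≤ (√a * ‖u‖) * (√a * ‖v‖) :=
  calc |a * ⟪u, v⟫_ℝ| = a * |⟪u, v⟫_ℝ| := by rw [abs_mul, abs_of_nonneg ha]
    _ ≤ a * (‖u‖ * ‖v‖) := by gcongr; exact abs_real_inner_le_norm u v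
    _ = (√a * ‖u‖) * (√a * ‖v‖) := by rw [mul_mul_mul_comm, Real.mul_self_sqrt ha]

theorem abs_inner_apply_le_of_opNorm_le (hT : ‖T‖ ≤ 2 * θ * (√a * √c)) (u : U) (w : W) :
    |⟪T u, w⟫_ℝ| ≤ 2 * θ * ((√a * ‖u‖) * (√c * ‖w‖)) :=
  calc |⟪T u, w⟫_ℝ| ≤ ‖T u‖ * ‖w‖ := abs_real_inner_le_norm _ _
    _ ≤ 2 * θ * (√a * √c) * ‖u‖ * ‖w‖ := by gcongr; exact T.le_of_opNorm_le hT u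
    _ = 2 * θ * ((√a * ‖u‖) * (√c * ‖w‖)) := by ring

theorem abs_driftForm_le (ha : 0 ≤ a) (hc : 0 ≤ c) (hθ : 0 ≤ θ)
    (hT : ‖T‖ ≤ 2 * θ * (√a * √c)) (x y : W × U) :
    |driftForm a c T x y| ≤ 2 * (1 + θ) * (energyNorm a c x * energyNorm a c y) := by
  have snd_le (z : W × U) := sqrt_mul_norm_snd_le_energyNorm ha hc z
  have fst_le (z : W × U) := sqrt_mul_norm_fst_le_energyNorm ha hc z
  have hx := energyNorm_nonneg a c x
  have gradient_le : |a * ⟪x.2, y.2⟫_ℝ| ≤ energyNorm a c x * energyNorm a c y :=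
    (abs_mul_inner_le ha _ _).trans (by gcongr <;> exact snd_le _)
  have drift_le : |⟪T x.2, y.1⟫_ℝ| ≤ 2 * θ * (energyNorm a c x * energyNorm a c y) :=
    (abs_inner_apply_le_of_opNorm_le hT _ _).trans (by gcongr; exacts [snd_le x, fst_le y])
  have mass_le : |c * ⟪x.1, y.1⟫_ℝ| ≤ energyNorm a c x * energyNorm a c y :=
    (abs_mul_inner_le hc _ _).trans (by gcongr <;> exact fst_le _)
  calc |driftForm a c T x y|
      ≤ |a * ⟪x.2, y.2⟫_ℝ| + |⟪T x.2, y.1⟫_ℝ| + |c * ⟪x.1, y.1⟫_ℝ| :=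
        (abs_add_le _ _).trans (add_le_add_left (abs_sub _ _) _)
    _ ≤ 2 * (1 + θ) * (energyNorm a c x * energyNorm a c y) := by linarith

theorem mul_energyNorm_sq_le_driftForm_self (ha : 0 ≤ a) (hc : 0 ≤ c) (hθ : 0 ≤ θ)
    (hT : ‖T‖ ≤ 2 * θ * (√a * √c)) (x : W × U) :
    (1 - θ) * energyNorm a c x ^ 2 ≤ driftForm a c T x x := by
  have drift_le : ⟪T x.2, x.1⟫_ℝ ≤ θ * energyNorm a c x ^ 2 :=
    calc ⟪T x.2, x.1⟫_ℝ ≤ 2 * θ * ((√a * ‖x.2‖) * (√c * ‖x.1‖)) :=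
          (le_abs_self _).trans (abs_inner_apply_le_of_opNorm_le hT _ _)
      _ = θ * (2 * (√a * ‖x.2‖) * (√c * ‖x.1‖)) := by ring
      _ ≤ θ * ((√a * ‖x.2‖) ^ 2 + (√c * ‖x.1‖) ^ 2) := by
        gcongr
        exact two_mul_le_add_sq _ _
      _ = θ * energyNorm a c x ^ 2 := by
        rw [mul_pow, mul_pow, Real.sq_sqrt ha, Real.sq_sqrt hc, energyNorm_sq ha hc]
  calc (1 - θ) * energyNorm a c x ^ 2
      = energyNorm a c x ^ 2 - θ * energyNorm a c x ^ 2 := by ring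
    _ ≤ energyNorm a c x ^ 2 - ⟪T x.2, x.1⟫_ℝ := by gcongr
    _ = driftForm a c T x x := by
      rw [driftForm, energyNorm_sq ha hc, real_inner_self_eq_norm_sq, real_inner_self_eq_norm_sq]
      ring

theorem abs_driftForm_le_mul_sqrt_mul_sqrt (ha : 0 ≤ a) (hc : 0 ≤ c) (hθ : 0 ≤ θ) (hθ₁ : θ < 1)
    (hT : ‖T‖ ≤ 2 * θ * (√a * √c)) (x y : W × U) :
    |driftForm a c T x y| ≤
      2 * (1 + θ) / (1 - θ) * √(driftForm a c T x x) * √(driftForm a c T y y) :=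
  abs_le_div_mul_sqrt_mul_sqrt_of_coercive (by positivity) (sub_pos.2 hθ₁)
    (abs_driftForm_le ha hc hθ hT) (mul_energyNorm_sq_le_driftForm_self ha hc hθ hT) x y

end DriftForm

section DriftOperator

variable {X : Type*} [MeasurableSpace X] {ν : Measure X}
  {K : Type*} [NormedAddCommGroup K] [InnerProductSpace ℝ K]

theorem inner_toLp_toLp_eq_integral {F G : X → K} (hF : MemLp F 2 ν) (hG : MemLp G 2 ν) :
    ⟪hF.toLp F, hG.toLp G⟫_ℝ = ∫ x, ⟪F x, G x⟫_ℝ ∂ν := by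
  rw [L2.inner_def]
  refine integral_congr_ae ?_
  filter_upwards [hF.coeFn_toLp, hG.coeFn_toLp] with x hFx hGx
  rw [hFx, hGx]

/-- The operator `F ↦ ⟪v, F⟫` from `L²(ν; K)` to `L²(ν; ℝ)` given by a bounded field `v`, to be used
as the perturbation in `driftForm`. -/
noncomputable def driftOperator (v : Lp K ⊤ ν) : Lp K 2 ν →L[ℝ] Lp ℝ 2 ν :=
  (innerSL ℝ).holderL ν ⊤ 2 2 v

theorem norm_driftOperator_le (v : Lp K ⊤ ν) : ‖driftOperator v‖ ≤ ‖v‖ := by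
  refine ContinuousLinearMap.opNorm_le_bound _ (norm_nonneg v) fun F => ?_
  refine ((innerSL ℝ).norm_holder_apply_apply_le v F).trans ?_
  gcongr
  exact mul_le_of_le_one_left (norm_nonneg v) (norm_innerSL_le ℝ)

theorem norm_toLp_top_le {E : Type*} [NormedAddCommGroup E] {v : X → E} {M : ℝ} (hM : 0 ≤ M)
    (hv : MemLp v ⊤ ν) (hvM : ∀ᵐ x ∂ν, ‖v x‖ ≤ M) : ‖hv.toLp v‖ ≤ M := by
  rw [Lp.norm_toLp, eLpNorm_exponent_top]
  exact ENNReal.toReal_le_of_le_ofReal hM (eLpNormEssSup_le_of_ae_bound hvM)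

theorem driftOperator_toLp_ae_eq {v F : X → K} (hv : MemLp v ⊤ ν) (hF : MemLp F 2 ν) :
    driftOperator (hv.toLp v) (hF.toLp F) =ᵐ[ν] fun x => ⟪v x, F x⟫_ℝ := by
  filter_upwards [(innerSL ℝ).coeFn_holder (r := 2) (hv.toLp v) (hF.toLp F), hv.coeFn_toLp,
    hF.coeFn_toLp] with x hx hvx hFx
  rw [← innerSL_apply_apply ℝ, ← hvx, ← hFx]
  exact hx

theorem inner_driftOperator_toLp_eq_integral {v F : X → K} {g : X → ℝ} (hv : MemLp v ⊤ ν)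
    (hF : MemLp F 2 ν) (hg : MemLp g 2 ν) :
    ⟪driftOperator (hv.toLp v) (hF.toLp F), hg.toLp g⟫_ℝ = ∫ x, ⟪v x, F x⟫_ℝ * g x ∂ν := by
  rw [L2.inner_def]
  refine integral_congr_ae ?_
  filter_upwards [driftOperator_toLp_ae_eq hv hF, hg.coeFn_toLp] with x hTx hgx
  rw [hTx, hgx, Real.inner_apply]

theorem driftForm_toLp_eq_integral (a c : ℝ) {v F G : X → K} {f g : X → ℝ} (hv : MemLp v ⊤ ν)
    (hf : MemLp f 2 ν) (hF : MemLp F 2 ν) (hg : MemLp g 2 ν) (hG : MemLp G 2 ν) :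
    driftForm a c (driftOperator (hv.toLp v)) (hf.toLp f, hF.toLp F) (hg.toLp g, hG.toLp G) =
      a * (∫ x, ⟪F x, G x⟫_ℝ ∂ν) - (∫ x, ⟪v x, F x⟫_ℝ * g x ∂ν) + c * ∫ x, f x * g x ∂ν := by
  simp only [driftForm, inner_toLp_toLp_eq_integral, inner_driftOperator_toLp_eq_integral,
    Real.inner_apply]

end DriftOperator

theorem exists_lt_one_eq_two_mul_mul_sqrt_mul_sqrt {a c M : ℝ} (ha : 0 < a) (hM : 0 ≤ M)
    (hMac : M ^ 2 < 4 * a * c) : ∃ θ : ℝ, 0 ≤ θ ∧ θ < 1 ∧ M = 2 * θ * (√a * √c) := by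
  have hc : 0 < c := pos_of_mul_pos_right ((sq_nonneg M).trans_lt hMac) (by positivity)
  refine ⟨M / (2 * (√a * √c)), by positivity, ?_, by field_simp⟩
  rw [div_lt_one (by positivity)]
  refine lt_of_pow_lt_pow_left₀ 2 (by positivity) ?_
  calc M ^ 2 < 4 * a * c := hMac
    _ = (2 * (√a * √c)) ^ 2 := by
      rw [mul_pow, mul_pow, Real.sq_sqrt ha.le, Real.sq_sqrt hc.le]
      ring

theorem weak_sector_condition_general {a c M : ℝ} (ha : 0 < a) (hM : 0 ≤ M)
    (hMac : M ^ 2 < 4 * a * c) :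
    ∃ K₀ : ℝ, 0 < K₀ ∧
      ∀ {X : Type*} [MeasurableSpace X] (ν : Measure X)
        {K : Type*} [NormedAddCommGroup K] [InnerProductSpace ℝ K]
        (v : X → K), AEStronglyMeasurable v ν → (∀ᵐ x ∂ν, ‖v x‖ ≤ M) →
      ∀ (f g : X → ℝ), MemLp f 2 ν → MemLp g 2 ν →
      ∀ (F G : X → K), MemLp F 2 ν → MemLp G 2 ν →
        |a * (∫ x, ⟪F x, G x⟫_ℝ ∂ν) - (∫ x, ⟪v x, F x⟫_ℝ * g x ∂ν) + c * ∫ x, f x * g x ∂ν|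
          ≤ K₀ * √(a * (∫ x, ⟪F x, F x⟫_ℝ ∂ν) - (∫ x, ⟪v x, F x⟫_ℝ * f x ∂ν)
                + c * ∫ x, f x * f x ∂ν)
              * √(a * (∫ x, ⟪G x, G x⟫_ℝ ∂ν) - (∫ x, ⟪v x, G x⟫_ℝ * g x ∂ν)
                + c * ∫ x, g x * g x ∂ν) := by
  have hc : 0 < c := pos_of_mul_pos_right ((sq_nonneg M).trans_lt hMac) (by positivity)
  obtain ⟨θ, hθ, hθ₁, hMθ⟩ := exists_lt_one_eq_two_mul_mul_sqrt_mul_sqrt ha hM hMac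
  refine ⟨2 * (1 + θ) / (1 - θ), div_pos (by positivity) (sub_pos.2 hθ₁), ?_⟩
  intro X _ ν K _ _ v hv hvM f g hf hg F G hF hG
  have hv_top : MemLp v ⊤ ν := memLp_top_of_bound hv M hvM
  have norm_le : ‖driftOperator (hv_top.toLp v)‖ ≤ 2 * θ * (√a * √c) :=
    (norm_driftOperator_le _).trans ((norm_toLp_top_le hM hv_top hvM).trans_eq hMθ)
  simpa only [driftForm_toLp_eq_integral] using
    abs_driftForm_le_mul_sqrt_mul_sqrt ha.le hc.le hθ hθ₁ norm_le
      (hf.toLp f, hF.toLp F) (hg.toLp g, hG.toLp G)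

/-- Weak sector condition for the bilinear form
`E((f,F),(g,G)) = (1/2)∫⟪F,G⟫ − ∫⟪v,F⟫ g + (1+λ)∫ f g`:
there exists `K₀ > 0` depending only on `M` and `λ` with
`|E((f,F),(g,G))| ≤ K₀ E((f,F),(f,F))^{1/2} E((g,G),(g,G))^{1/2}`. -/
theorem weak_sector_condition
    {X : Type*} [MeasurableSpace X] (ν : Measure X) [IsFiniteMeasure ν]
    {K : Type*} [NormedAddCommGroup K] [InnerProductSpace ℝ K]
    (M : ℝ) (hM : 0 < M)
    (lam : ℝ) (hlam : 4 * M ^ 2 < lam) :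
    ∃ K₀ : ℝ, 0 < K₀ ∧
      ∀ (v : X → K), AEStronglyMeasurable v ν → (∀ᵐ x ∂ν, ‖v x‖ ≤ M) →
      ∀ (f g : X → ℝ), MemLp f 2 ν → MemLp g 2 ν →
      ∀ (F G : X → K), MemLp F 2 ν → MemLp G 2 ν →
        |(1/2) * (∫ x, ⟪F x, G x⟫_ℝ ∂ν) - (∫ x, ⟪v x, F x⟫_ℝ * g x ∂ν)
            + (1 + lam) * ∫ x, f x * g x ∂ν|
          ≤ K₀ * Real.sqrt ((1/2) * (∫ x, ⟪F x, F x⟫_ℝ ∂ν)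
                - (∫ x, ⟪v x, F x⟫_ℝ * f x ∂ν) + (1 + lam) * ∫ x, f x * f x ∂ν)
              * Real.sqrt ((1/2) * (∫ x, ⟪G x, G x⟫_ℝ ∂ν)
                - (∫ x, ⟪v x, G x⟫_ℝ * g x ∂ν) + (1 + lam) * ∫ x, g x * g x ∂ν) := by
  obtain ⟨K₀, hK₀, sector⟩ := weak_sector_condition_general (a := 1 / 2) (c := 1 + lam)
    one_half_pos hM.le (by linarith [sq_nonneg M])
  exact ⟨K₀, hK₀, sector ν⟩
end

section
/- Let (X, 𝒜, ν) be a probability space and let T : L¹(ν) → L¹(ν) be a linear operator which is positivity preserving (f ≥ 0 ν-a.e. implies Tf ≥ 0 ν-a.e.) and sub-Markovian (T1 ≤ 1 ν-a.e., where 1 denotes the constant function 1). Then for every f ∈ L¹(ν) with f ≥ 0 ν-a.e., one has T(√f) ≤ √(Tf) ν-a.e. -/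
open MeasureTheory

/-! For `r > 0`, the AM-GM inequality `2 r √f ≤ f + r²` says that `2 r √f - f` is bounded by the
constant `r²`, and a sub-Markovian operator preserves this bound: `2 r T(√f) - T f ≤ r²` almost
everywhere. Letting `r` range over the positive rationals gives one common null set, off which
optimizing in `r` yields `T(√f) ≤ √(T f)`. -/

section SubMarkovian

variable {X Y : Type*} [MeasurableSpace X] [MeasurableSpace Y] {μ : Measure X} {ν : Measure Y}
  {p q : ENNReal} {T : Lp ℝ p μ →ₗ[ℝ] Lp ℝ q ν}

/-- Sub-Markovian operators between `Lᵖ` spaces: `h ≤ 1` implies `T h ≤ 1`, almost everywhere. By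
scaling, this single condition includes positivity preservation, and it makes sense on infinite
measure spaces, where the constant function `1` need not belong to `Lᵖ`. -/
def IsSubMarkovian (T : Lp ℝ p μ →ₗ[ℝ] Lp ℝ q ν) : Prop :=
  ∀ h : Lp ℝ p μ, (∀ᵐ x ∂μ, h x ≤ 1) → ∀ᵐ y ∂ν, T h y ≤ 1

theorem isSubMarkovian_of_map_one_le_one
    (hpos : ∀ h : Lp ℝ p μ, (∀ᵐ x ∂μ, 0 ≤ h x) → ∀ᵐ y ∂ν, 0 ≤ T h y)
    {e : Lp ℝ p μ} (he : ∀ᵐ x ∂μ, e x = 1) (hTe : ∀ᵐ y ∂ν, T e y ≤ 1) :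
    IsSubMarkovian T := by
  intro h hh
  have nonneg_sub : ∀ᵐ x ∂μ, 0 ≤ (e - h) x := by
    filter_upwards [hh, he, Lp.coeFn_sub e h] with x hx hex hsub
    rw [hsub, Pi.sub_apply, hex]
    exact sub_nonneg.2 hx
  have map_nonneg_sub := hpos _ nonneg_sub
  rw [map_sub] at map_nonneg_sub
  filter_upwards [map_nonneg_sub, hTe, Lp.coeFn_sub (T e) (T h)] with y hy hey hsub
  rw [hsub, Pi.sub_apply] at hy
  exact (sub_nonneg.1 hy).trans hey

namespace IsSubMarkovian

theorem map_le_const (hT : IsSubMarkovian T) {c : ℝ} (hc : 0 < c) {h : Lp ℝ p μ}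
    (hh : ∀ᵐ x ∂μ, h x ≤ c) : ∀ᵐ y ∂ν, T h y ≤ c := by
  have scaled_le_one : ∀ᵐ x ∂μ, (c⁻¹ • h) x ≤ 1 := by
    filter_upwards [hh, Lp.coeFn_smul c⁻¹ h] with x hx hsmul
    rw [hsmul, Pi.smul_apply, smul_eq_mul]
    exact inv_mul_le_one_of_le₀ hx hc.le
  have map_scaled_le_one := hT _ scaled_le_one
  rw [map_smul] at map_scaled_le_one
  filter_upwards [map_scaled_le_one, Lp.coeFn_smul c⁻¹ (T h)] with y hy hsmul
  rwa [hsmul, Pi.smul_apply, smul_eq_mul, inv_mul_le_one₀ hc] at hy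

theorem mul_map_le_map_add (hT : IsSubMarkovian T) {f g : Lp ℝ p μ} (a : ℝ) {c : ℝ} (hc : 0 < c)
    (h : ∀ᵐ x ∂μ, a * g x ≤ f x + c) : ∀ᵐ y ∂ν, a * T g y ≤ T f y + c := by
  have sub_le_const : ∀ᵐ x ∂μ, (a • g - f) x ≤ c := by
    filter_upwards [h, Lp.coeFn_sub (a • g) f, Lp.coeFn_smul a g] with x hx hsub hsmul
    rw [hsub, Pi.sub_apply, hsmul, Pi.smul_apply, smul_eq_mul]
    exact sub_le_iff_le_add'.2 hx
  have map_sub_le_const := hT.map_le_const hc sub_le_const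
  rw [map_sub, map_smul] at map_sub_le_const
  filter_upwards [map_sub_le_const, Lp.coeFn_sub (a • T g) (T f), Lp.coeFn_smul a (T g)]
    with y hy hsub hsmul
  rw [hsub, Pi.sub_apply, hsmul, Pi.smul_apply, smul_eq_mul] at hy
  exact sub_le_iff_le_add'.1 hy

end IsSubMarkovian

end SubMarkovian

theorem two_mul_mul_le_add_sq_of_le_sqrt {a b r : ℝ} (ha : 0 ≤ a) (hr : 0 ≤ r) (hb : b ≤ √a) :
    2 * r * b ≤ a + r ^ 2 :=
  calc
    2 * r * b ≤ 2 * r * √a := by gcongr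
    _ ≤ r ^ 2 + √a ^ 2 := two_mul_le_add_sq r √a
    _ = a + r ^ 2 := by rw [Real.sq_sqrt ha, add_comm]

theorem le_sqrt_of_forall_rat_two_mul_mul_le {a b : ℝ}
    (h : ∀ r : ℚ, 0 < r → 2 * (r : ℝ) * b ≤ a + (r : ℝ) ^ 2) : b ≤ √a := by
  refine le_of_forall_rat_lt_imp_le fun r hrb ↦ ?_
  rcases le_or_gt r 0 with hr | hr
  · exact (Rat.cast_nonpos.2 hr).trans (Real.sqrt_nonneg a)
  · have hr' : (0 : ℝ) < r := Rat.cast_pos.2 hr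
    have mul_self_le : (r : ℝ) * r ≤ r * b := mul_le_mul_of_nonneg_left hrb.le hr'.le
    exact Real.le_sqrt_of_sq_le (by linarith [h r hr])

theorem subMarkovian_sqrt_jensen_general {X Y : Type*} [MeasurableSpace X] [MeasurableSpace Y]
    {μ : Measure X} {ν : Measure Y} {p q : ENNReal} {T : Lp ℝ p μ →ₗ[ℝ] Lp ℝ q ν}
    (hT : IsSubMarkovian T) {f g : Lp ℝ p μ} (hf : ∀ᵐ x ∂μ, 0 ≤ f x)
    (hg : ∀ᵐ x ∂μ, g x ≤ √(f x)) : ∀ᵐ y ∂ν, T g y ≤ √(T f y) := by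
  have two_mul_map_le (r : ℚ) (hr : 0 < r) :
      ∀ᵐ y ∂ν, 2 * (r : ℝ) * T g y ≤ T f y + (r : ℝ) ^ 2 := by
    have hr' : (0 : ℝ) < r := Rat.cast_pos.2 hr
    refine hT.mul_map_le_map_add _ (pow_pos hr' 2) ?_
    filter_upwards [hf, hg] with x hfx hgx
    exact two_mul_mul_le_add_sq_of_le_sqrt hfx hr'.le hgx
  have two_mul_map_le_all : ∀ᵐ y ∂ν, ∀ r : ℚ, 0 < r →
      2 * (r : ℝ) * T g y ≤ T f y + (r : ℝ) ^ 2 := by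
    simpa only [ae_all_iff] using two_mul_map_le
  exact two_mul_map_le_all.mono fun _ ↦ le_sqrt_of_forall_rat_two_mul_mul_le

/-- A positivity preserving sub-Markovian linear operator `T` on `L¹(ν)`
over a probability space satisfies the Jensen-type inequality `T(√f) ≤ √(Tf)` a.e. for
every a.e. nonnegative `f ∈ L¹(ν)`. -/
theorem subMarkovian_sqrt_jensen
    {X : Type*} [MeasurableSpace X] (ν : Measure X) [IsProbabilityMeasure ν]
    (T : Lp ℝ 1 ν →ₗ[ℝ] Lp ℝ 1 ν)
    (hpos : ∀ f : Lp ℝ 1 ν, (∀ᵐ x ∂ν, 0 ≤ f x) → (∀ᵐ x ∂ν, 0 ≤ T f x))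
    (hsub : ∀ f : Lp ℝ 1 ν, (∀ᵐ x ∂ν, f x = 1) → (∀ᵐ x ∂ν, T f x ≤ 1))
    (f : Lp ℝ 1 ν) (hf : ∀ᵐ x ∂ν, 0 ≤ f x)
    (g : Lp ℝ 1 ν) (hg : ∀ᵐ x ∂ν, g x = Real.sqrt (f x)) :
    ∀ᵐ x ∂ν, T g x ≤ Real.sqrt (T f x) :=
  have coe_one : ∀ᵐ x ∂ν, Lp.const 1 ν (1 : ℝ) x = 1 := Lp.coeFn_const 1 ν 1
  subMarkovian_sqrt_jensen_general (isSubMarkovian_of_map_one_le_one hpos coe_one (hsub _ coe_one))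
    hf (hg.mono fun _ ↦ le_of_eq)
end

section
/- Let ℋ be a real Hilbert space and let N be a linear operator with dense domain D ⊆ ℋ and values in ℋ such that: (a) N is dissipative, i.e. ⟨Nφ, φ⟩ ≤ 0 for all φ ∈ D; (b) N is essentially m-dissipative, i.e. for every λ > 0 the set {λφ − Nφ : φ ∈ D} is dense in ℋ. Let c > 0 and let P : D → ℋ be a linear map satisfying ‖Pφ‖² ≤ −c ⟨Nφ, φ⟩ for all φ ∈ D. Then: (i) ⟨Nφ + Pφ, φ⟩ ≤ (c/2) ‖φ‖² for all φ ∈ D; and (ii) there exists λ₀ > 0 such that for every λ ≥ λ₀ the set {λφ − Nφ − Pφ : φ ∈ D} is dense in ℋ. -/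
open scoped InnerProductSpace

/-!
From `‖λφ - Nφ‖² = ‖λφ + Nφ‖² - 4λ Re⟪Nφ, φ⟫` and the hypothesis on `P` one gets
`4λ ‖Pφ‖² ≤ c ‖λφ - Nφ‖²`, so for `λ > c/4` the perturbation `P` is bounded relative to `λ - N`
with a constant `q < 1`. Hence every vector of the dense range of `λ - N` lies within `q` times its
norm of the range of `λ - N - P`. By Riesz's lemma a subspace that is not dense has almost
orthogonal vectors, whose distance to it exceeds `q` times their norm, so the latter range is dense
too.
-/

theorem dense_submodule_of_exists_norm_sub_le {𝕜 E : Type*} [NormedField 𝕜]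
    [NormedAddCommGroup E] [NormedSpace 𝕜 E] {F : Submodule 𝕜 E} {s : Set E} {q : ℝ}
    (hs : Dense s) (hq : q < 1) (hF : ∀ z ∈ s, ∃ y ∈ F, ‖z - y‖ ≤ q * ‖z‖) :
    Dense (F : Set E) := by
  rw [Submodule.dense_iff_topologicalClosure_eq_top]
  by_contra hne
  obtain ⟨r, hqr, hr⟩ := exists_between hq
  obtain ⟨x, hxF, hx⟩ := riesz_lemma F.isClosed_topologicalClosure
    (by simpa [Submodule.eq_top_iff'] using hne) hr
  have hx_pos : 0 < ‖x‖ := norm_pos_iff.2 fun h => hxF (h ▸ zero_mem _)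
  have hclosed : IsClosed {z : E | r * ‖x‖ ≤ ‖x - z‖ + q * ‖z‖} :=
    isClosed_le (by fun_prop) (by fun_prop)
  have hsub : s ⊆ {z : E | r * ‖x‖ ≤ ‖x - z‖ + q * ‖z‖} := by
    intro z hz
    obtain ⟨y, hy, hzy⟩ := hF z hz
    calc r * ‖x‖ ≤ ‖x - y‖ := hx y (F.le_topologicalClosure hy)
      _ ≤ ‖x - z‖ + ‖z - y‖ := norm_sub_le_norm_sub_add_norm_sub x z y
      _ ≤ ‖x - z‖ + q * ‖z‖ := by gcongr
  have hxq : r * ‖x‖ ≤ q * ‖x‖ := by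
    simpa using closure_minimal hsub hclosed (hs x)
  exact hqr.not_ge (le_of_mul_le_mul_right hxq hx_pos)

section InnerProductSpace

open RCLike (re)

variable {𝕜 E : Type*} [RCLike 𝕜] [NormedAddCommGroup E] [InnerProductSpace 𝕜 E]
  {c lam : ℝ} {x y p : E}

theorem re_inner_add_le_of_norm_sq_le (hc : 0 < c) (hp : ‖p‖ ^ 2 ≤ -c * re ⟪y, x⟫_𝕜) :
    re ⟪y + p, x⟫_𝕜 ≤ c / 4 * ‖x‖ ^ 2 := by
  have hyoung : c * (‖p‖ * ‖x‖) ≤ ‖p‖ ^ 2 + c ^ 2 / 4 * ‖x‖ ^ 2 := by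
    linarith [sq_nonneg (‖p‖ - c / 2 * ‖x‖)]
  have hpx : c * re ⟪p, x⟫_𝕜 ≤ c * (‖p‖ * ‖x‖) := by
    gcongr
    exact re_inner_le_norm p x
  refine le_of_mul_le_mul_left ?_ hc
  rw [inner_add_left, map_add]
  linarith

theorem four_mul_norm_sq_le_mul_norm_smul_sub_sq (hc : 0 ≤ c) (hlam : 0 ≤ lam)
    (hp : ‖p‖ ^ 2 ≤ -c * re ⟪y, x⟫_𝕜) :
    4 * lam * ‖p‖ ^ 2 ≤ c * ‖(lam : 𝕜) • x - y‖ ^ 2 := by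
  have hpolar : -(4 * lam * re ⟪y, x⟫_𝕜) ≤ ‖(lam : 𝕜) • x - y‖ ^ 2 := by
    have h := re_inner_eq_norm_add_mul_self_sub_norm_sub_mul_self_div_four (𝕜 := 𝕜)
      ((lam : 𝕜) • x) y
    rw [inner_smul_left, RCLike.conj_ofReal, RCLike.re_ofReal_mul, inner_re_symm] at h
    linarith [mul_self_nonneg ‖(lam : 𝕜) • x + y‖]
  calc 4 * lam * ‖p‖ ^ 2 ≤ 4 * lam * (-c * re ⟪y, x⟫_𝕜) := by gcongr
    _ = c * -(4 * lam * re ⟪y, x⟫_𝕜) := by ring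
    _ ≤ c * ‖(lam : 𝕜) • x - y‖ ^ 2 := by gcongr

theorem norm_le_sqrt_mul_norm_smul_sub (hc : 0 ≤ c) (hlam : 0 < lam)
    (hp : ‖p‖ ^ 2 ≤ -c * re ⟪y, x⟫_𝕜) :
    ‖p‖ ≤ √(c / (4 * lam)) * ‖(lam : 𝕜) • x - y‖ := by
  refine le_of_sq_le_sq ?_ (by positivity)
  rw [mul_pow, Real.sq_sqrt (by positivity), div_mul_eq_mul_div, le_div_iff₀ (by positivity),
    mul_comm]
  exact four_mul_norm_sq_le_mul_norm_smul_sub_sq hc hlam.le hp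

variable {D : Submodule 𝕜 E} {N P : D →ₗ[𝕜] E}

theorem dense_range_smul_sub_sub (hc : 0 ≤ c) (hlam : c / 4 < lam)
    (hN : Dense (Set.range fun φ : D => (lam : 𝕜) • (φ : E) - N φ))
    (hP : ∀ φ : D, ‖P φ‖ ^ 2 ≤ -c * re ⟪N φ, (φ : E)⟫_𝕜) :
    Dense (Set.range fun φ : D => (lam : 𝕜) • (φ : E) - N φ - P φ) := by
  have hlam_pos : 0 < lam := by linarith
  have hq : √(c / (4 * lam)) < 1 := by
    rw [Real.sqrt_lt' one_pos, one_pow, div_lt_one (by positivity)]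
    linarith
  refine dense_submodule_of_exists_norm_sub_le
    (F := LinearMap.range ((lam : 𝕜) • D.subtype - N - P)) hN hq ?_
  rintro _ ⟨φ, rfl⟩
  refine ⟨_, LinearMap.mem_range_self _ φ, ?_⟩
  simpa using norm_le_sqrt_mul_norm_smul_sub hc hlam_pos (hP φ)

theorem perturbed_essentially_m_dissipative_general
    (hN : ∀ lam : ℝ, 0 < lam → Dense (Set.range fun φ : D => (lam : 𝕜) • (φ : E) - N φ))
    (hc : 0 < c) (hP : ∀ φ : D, ‖P φ‖ ^ 2 ≤ -c * re ⟪N φ, (φ : E)⟫_𝕜) :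
    (∀ φ : D, re ⟪N φ + P φ, (φ : E)⟫_𝕜 ≤ c / 4 * ‖(φ : E)‖ ^ 2) ∧
    ∀ lam : ℝ, c / 4 < lam →
      Dense (Set.range fun φ : D => (lam : 𝕜) • (φ : E) - N φ - P φ) :=
  ⟨fun φ => re_inner_add_le_of_norm_sq_le hc (hP φ), fun lam hlam =>
    dense_range_smul_sub_sub hc.le hlam (hN lam (by linarith)) hP⟩

end InnerProductSpace

/-- Let `N` be a densely defined dissipative, essentially m-dissipative
linear operator on a real Hilbert space and `P` a perturbation with
`‖Pφ‖² ≤ −c⟨Nφ,φ⟩`. Then `N + P` is quasi-dissipative: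
`⟨Nφ + Pφ, φ⟩ ≤ (c/2)‖φ‖²`, and there is `λ₀ > 0` such that for all `λ ≥ λ₀` the range of
`λ − N − P` is dense. -/
theorem perturbed_essentially_m_dissipative
    {E : Type*} [NormedAddCommGroup E] [InnerProductSpace ℝ E] [CompleteSpace E]
    (D : Submodule ℝ E) (hD : Dense (D : Set E))
    (N : D →ₗ[ℝ] E)
    (hdiss : ∀ φ : D, ⟪N φ, (φ : E)⟫_ℝ ≤ 0)
    (hmdiss : ∀ lam : ℝ, 0 < lam →
      Dense (Set.range (fun φ : D => lam • (φ : E) - N φ)))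
    (c : ℝ) (hc : 0 < c)
    (P : D →ₗ[ℝ] E)
    (hP : ∀ φ : D, ‖P φ‖ ^ 2 ≤ -c * ⟪N φ, (φ : E)⟫_ℝ) :
    (∀ φ : D, ⟪N φ + P φ, (φ : E)⟫_ℝ ≤ (c / 2) * ‖(φ : E)‖ ^ 2) ∧
    (∃ lam₀ : ℝ, 0 < lam₀ ∧ ∀ lam : ℝ, lam₀ ≤ lam →
      Dense (Set.range (fun φ : D => lam • (φ : E) - N φ - P φ))) := by
  obtain ⟨hquasi, hdense⟩ := perturbed_essentially_m_dissipative_general hmdiss hc hP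
  exact ⟨fun φ => (hquasi φ).trans (by gcongr; norm_num), c, hc, fun lam hlam =>
    hdense lam (by linarith)⟩
end

section
/- Let ℋ and K be real Hilbert spaces, and let N be a closable densely defined linear operator with domain D ⊆ ℋ and values in ℋ, with closure N̄ having domain D̄. Let T : D → K be a linear map satisfying ‖Tφ‖²_K = −2 ⟨Nφ, φ⟩ for all φ ∈ D. Then there exists a linear map T̄ : D̄ → K extending T such that ‖T̄φ‖²_K = −2 ⟨N̄φ, φ⟩ for all φ ∈ D̄; moreover, T̄φ = lim_{n→∞} Tφ_n in K whenever (φ_n) ⊆ D with φ_n → φ in ℋ and Nφ_n → N̄φ in ℋ, so T̄ is continuous with respect to the graph norm of N̄. -/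
open MeasureTheory Filter Topology
open scoped InnerProductSpace

/-!
The identity `‖T φ‖² = -2 ⟪N φ, φ⟫` and the Cauchy–Schwarz inequality bound `T` in the graph norm
of `N`. Hence `T`, transported to the graph of `N`, is bounded, and it extends by density to the
closure of that graph, which is the graph of `N.closure`. The identity is a closed condition on the
triple `(φ, N φ, T φ)`, so it survives the extension.
-/

section GraphEmbedding

variable {R E F : Type*} [CommRing R] [AddCommGroup E] [AddCommGroup F] [Module R E] [Module R F]

/-- The embedding `x ↦ (x, f x)` of the domain of `f` into the graph of an extension `g` of `f`. -/
def graphEmbedding {f g : E →ₗ.[R] F} (hfg : f ≤ g) : f.domain →ₗ[R] g.graph :=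
  (f.domain.subtype.prod f.toFun).codRestrict g.graph
    fun x => LinearPMap.le_graph_of_le hfg (f.mem_graph x)

@[simp]
theorem coe_graphEmbedding {f g : E →ₗ.[R] F} (hfg : f ≤ g) (x : f.domain) :
    (graphEmbedding hfg x : E × F) = ((x : E), f x) :=
  rfl

theorem graphEmbedding_inclusion {f g : E →ₗ.[R] F} (hfg : f ≤ g) (x : f.domain) :
    graphEmbedding le_rfl (Submodule.inclusion hfg.1 x) = graphEmbedding hfg x :=
  Subtype.ext <| Prod.ext rfl (hfg.2 rfl).symm

theorem denseRange_graphEmbedding_closure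
    [TopologicalSpace R] [TopologicalSpace E] [TopologicalSpace F]
    [ContinuousAdd E] [ContinuousAdd F] [ContinuousSMul R E] [ContinuousSMul R F]
    {f : E →ₗ.[R] F} (hf : f.IsClosable) :
    DenseRange (graphEmbedding f.le_closure) := by
  rw [DenseRange, Subtype.dense_iff]
  intro z hz
  rw [SetLike.mem_coe, ← hf.graph_closure_eq_closure_graph] at hz
  refine closure_mono (fun w hw => ?_) hz
  obtain ⟨x, rfl⟩ := f.mem_graph_iff'.1 hw
  exact ⟨_, ⟨x, rfl⟩, rfl⟩

end GraphEmbedding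

section RelativelyBounded

variable {𝕜 E F K : Type*} [NormedField 𝕜]
  [NormedAddCommGroup E] [NormedSpace 𝕜 E] [NormedAddCommGroup F] [NormedSpace 𝕜 F]
  [NormedAddCommGroup K] [NormedSpace 𝕜 K]

/-- A linear map `T` on the domain of `f` is `f`-bounded, that is, bounded for the graph norm of
`f`. The graph norm is the maximum norm of `(x, f x)`, equivalent to `‖x‖ + ‖f x‖`. -/
def IsRelativelyBounded (f : E →ₗ.[𝕜] F) (T : f.domain →ₗ[𝕜] K) : Prop :=
  ∃ C : ℝ, ∀ x : f.domain, ‖T x‖ ≤ C * ‖((x : E), f x)‖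

variable [CompleteSpace K] {f : E →ₗ.[𝕜] F} {T : f.domain →ₗ[𝕜] K}

/-- The extension of an `f`-bounded map `T` to the domain of the closure of `f`, obtained by
extending `T` by density from the graph of `f` to that of `f.closure`. It is the zero map unless
`T` is `f`-bounded. -/
noncomputable def closureExtend (f : E →ₗ.[𝕜] F) (T : f.domain →ₗ[𝕜] K) :
    f.closure.domain →ₗ[𝕜] K :=
  (T.extendOfNorm (graphEmbedding f.le_closure)).toLinearMap ∘ₗ graphEmbedding le_rfl

theorem extendOfNorm_graphEmbedding (hf : f.IsClosable) (hT : IsRelativelyBounded f T)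
    (x : f.domain) :
    T.extendOfNorm (graphEmbedding f.le_closure) (graphEmbedding f.le_closure x) = T x :=
  LinearMap.extendOfNorm_eq (denseRange_graphEmbedding_closure hf) hT x

theorem closureExtend_inclusion (hf : f.IsClosable) (hT : IsRelativelyBounded f T)
    (x : f.domain) : closureExtend f T (Submodule.inclusion f.le_closure.1 x) = T x := by
  rw [closureExtend, LinearMap.comp_apply, graphEmbedding_inclusion]
  exact extendOfNorm_graphEmbedding hf hT x

theorem tendsto_closureExtend (hf : f.IsClosable) (hT : IsRelativelyBounded f T)
    {ι : Type*} {l : Filter ι} {u : ι → f.domain} {x : f.closure.domain}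
    (hu : Tendsto (fun i => (u i : E)) l (𝓝 x))
    (hfu : Tendsto (fun i => f (u i)) l (𝓝 (f.closure x))) :
    Tendsto (fun i => T (u i)) l (𝓝 (closureExtend f T x)) := by
  have h_graph : Tendsto (fun i => graphEmbedding f.le_closure (u i)) l
      (𝓝 (graphEmbedding le_rfl x)) :=
    tendsto_subtype_rng.2 (hu.prodMk_nhds hfu)
  simpa only [Function.comp_def, extendOfNorm_graphEmbedding hf hT] using!
    ((T.extendOfNorm (graphEmbedding f.le_closure)).continuous.tendsto _).comp h_graph

theorem closureExtend_mem_of_isClosed (hf : f.IsClosable) (hT : IsRelativelyBounded f T)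
    {s : Set (E × F × K)} (hs : IsClosed s) (h_mem : ∀ x : f.domain, ((x : E), f x, T x) ∈ s)
    (x : f.closure.domain) : ((x : E), f.closure x, closureExtend f T x) ∈ s := by
  let S := T.extendOfNorm (graphEmbedding f.le_closure)
  have h_closed : IsClosed {z : f.closure.graph | (z.1.1, z.1.2, S z) ∈ s} :=
    hs.preimage (by fun_prop)
  refine DenseRange.induction_on (p := fun z => (z.1.1, z.1.2, S z) ∈ s)
    (denseRange_graphEmbedding_closure hf) (graphEmbedding le_rfl x) h_closed fun y => ?_
  simpa only [S, extendOfNorm_graphEmbedding hf hT, coe_graphEmbedding] using h_mem y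

end RelativelyBounded

section QuadraticIdentity

variable {𝕜 E K : Type*} [RCLike 𝕜] [NormedAddCommGroup E] [InnerProductSpace 𝕜 E]
  [NormedAddCommGroup K] [NormedSpace 𝕜 K]

theorem isRelativelyBounded_of_norm_sq_eq {f : E →ₗ.[𝕜] E} {T : f.domain →ₗ[𝕜] K} {c : ℝ}
    (hT : ∀ x : f.domain, ‖T x‖ ^ 2 = c * RCLike.re ⟪f x, (x : E)⟫_𝕜) :
    IsRelativelyBounded f T := by
  refine ⟨√|c|, fun x => le_of_sq_le_sq ?_ (by positivity)⟩
  calc ‖T x‖ ^ 2 = c * RCLike.re ⟪f x, (x : E)⟫_𝕜 := hT x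
    _ ≤ |c| * |RCLike.re ⟪f x, (x : E)⟫_𝕜| := (le_abs_self _).trans_eq (abs_mul _ _)
    _ ≤ |c| * (‖f x‖ * ‖(x : E)‖) := by
      gcongr
      exact (RCLike.abs_re_le_norm _).trans (norm_inner_le_norm _ _)
    _ ≤ |c| * (‖((x : E), f x)‖ * ‖((x : E), f x)‖) := by
      gcongr
      · exact norm_snd_le ((x : E), f x)
      · exact norm_fst_le ((x : E), f x)
    _ = (√|c| * ‖((x : E), f x)‖) ^ 2 := by
      rw [mul_pow, Real.sq_sqrt (abs_nonneg c), sq ‖_‖]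

theorem norm_sq_closureExtend [CompleteSpace K] {f : E →ₗ.[𝕜] E} (hf : f.IsClosable)
    {T : f.domain →ₗ[𝕜] K} {c : ℝ}
    (hT : ∀ x : f.domain, ‖T x‖ ^ 2 = c * RCLike.re ⟪f x, (x : E)⟫_𝕜) (x : f.closure.domain) :
    ‖closureExtend f T x‖ ^ 2 = c * RCLike.re ⟪f.closure x, (x : E)⟫_𝕜 := by
  have h_closed : IsClosed {z : E × E × K | ‖z.2.2‖ ^ 2 = c * RCLike.re ⟪z.2.1, z.1⟫_𝕜} :=
    isClosed_eq (by fun_prop) (by fun_prop)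
  exact closureExtend_mem_of_isClosed hf (isRelativelyBounded_of_norm_sq_eq hT) h_closed hT x

theorem extension_of_carre_du_champ_general [CompleteSpace K] {N : E →ₗ.[𝕜] E}
    (hclosable : N.IsClosable) {T : N.domain →ₗ[𝕜] K} {c : ℝ}
    (hT : ∀ φ : N.domain, ‖T φ‖ ^ 2 = c * RCLike.re ⟪N φ, (φ : E)⟫_𝕜) :
    ∃ Tbar : N.closure.domain →ₗ[𝕜] K,
      (∀ (x : E) (hx : x ∈ N.domain) (hx' : x ∈ N.closure.domain),
        Tbar ⟨x, hx'⟩ = T ⟨x, hx⟩) ∧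
      (∀ φ : N.closure.domain,
        ‖Tbar φ‖ ^ 2 = c * RCLike.re ⟪N.closure φ, (φ : E)⟫_𝕜) ∧
      (∀ (φ : N.closure.domain) (seq : ℕ → N.domain),
        Tendsto (fun n => (seq n : E)) atTop (𝓝 (φ : E)) →
        Tendsto (fun n => N (seq n)) atTop (𝓝 (N.closure φ)) →
        Tendsto (fun n => T (seq n)) atTop (𝓝 (Tbar φ))) := by
  have hT_bdd : IsRelativelyBounded N T := isRelativelyBounded_of_norm_sq_eq hT
  exact ⟨closureExtend N T,
    fun x hx _ => closureExtend_inclusion hclosable hT_bdd ⟨x, hx⟩,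
    norm_sq_closureExtend hclosable hT,
    fun _ _ => tendsto_closureExtend hclosable hT_bdd⟩

end QuadraticIdentity

/-- Let `N` be a closable densely defined operator on a real Hilbert
space `E` with closure `N̄`, and `T : D(N) → K` linear with `‖Tφ‖² = −2⟨Nφ,φ⟩`. Then `T`
extends to `T̄ : D(N̄) → K` with `‖T̄φ‖² = −2⟨N̄φ,φ⟩`, and `T̄φ = lim Tφₙ` whenever
`φₙ ∈ D(N)`, `φₙ → φ` and `Nφₙ → N̄φ`; in particular `T̄` is graph-norm continuous. -/
theorem extension_of_carre_du_champ
    {E : Type*} [NormedAddCommGroup E] [InnerProductSpace ℝ E] [CompleteSpace E]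
    {K : Type*} [NormedAddCommGroup K] [InnerProductSpace ℝ K] [CompleteSpace K]
    (N : E →ₗ.[ℝ] E) (hdense : Dense (N.domain : Set E)) (hclosable : N.IsClosable)
    (T : N.domain →ₗ[ℝ] K)
    (hT : ∀ φ : N.domain, ‖T φ‖ ^ 2 = -2 * ⟪N φ, (φ : E)⟫_ℝ) :
    ∃ Tbar : N.closure.domain →ₗ[ℝ] K,
      (∀ (x : E) (hx : x ∈ N.domain) (hx' : x ∈ N.closure.domain),
        Tbar ⟨x, hx'⟩ = T ⟨x, hx⟩) ∧
      (∀ φ : N.closure.domain, ‖Tbar φ‖ ^ 2 = -2 * ⟪N.closure φ, (φ : E)⟫_ℝ) ∧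
      (∀ (φ : N.closure.domain) (seq : ℕ → N.domain),
        Tendsto (fun n => ((seq n : E))) atTop (𝓝 (φ : E)) →
        Tendsto (fun n => N (seq n)) atTop (𝓝 (N.closure φ)) →
        Tendsto (fun n => T (seq n)) atTop (𝓝 (Tbar φ))) := by
  exact extension_of_carre_du_champ_general hclosable hT
end
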